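/- Let k, i, j be integers with 1 < i < k and j ≥ 1. Set K = k + 2(j−1) and F = {i+j−1,…,i+2(j−1)} (a block of j consecutive elements). The number of permutations σ of {1,…,K} such that σ(F) = {1,…,j} and σ fixes no prefix of size s for any s ∈ {j,…,i+j−2} ∪ {i+2(j−1),…,K−1} equals j!·c_{k+j−2}^{{i+j−2,…,k+j−3}}. -/

import Mathlib

open Nat Finset

/-- The prefix `{1, …, j}` of `{1, …, n}`. We represent `{1, …, n}` by `Fin n`,
an element `x : Fin n` having label `x.val + 1`; so the prefix of size `j` is the
set of elements with label at most `j`. -/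
def pref (n j : ℕ) : Finset (Fin n) :=
  Finset.univ.filter (fun x => x.val + 1 ≤ j)

/-- The segment `{u, …, v}` inside `{1, …, n}` (labels as above). -/
def seg (n u v : ℕ) : Finset (Fin n) :=
  Finset.univ.filter (fun x => u ≤ x.val + 1 ∧ x.val + 1 ≤ v)

/-- A permutation `σ` of `{1, …, n}` fixes a prefix of size `j` if
`σ({1, …, j}) = {1, …, j}`. -/
def FixesPrefix {n : ℕ} (σ : Equiv.Perm (Fin n)) (j : ℕ) : Prop :=
  (pref n j).image σ = pref n j

/-- `c n`: the number of connected permutations of size `n`, i.e. permutations of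
`{1, …, n}` fixing no prefix of size `j` for any `1 ≤ j ≤ n - 1`. -/
noncomputable def c (n : ℕ) : ℕ :=
  Nat.card {σ : Equiv.Perm (Fin n) // ∀ j, 1 ≤ j → j ≤ n - 1 → ¬ FixesPrefix σ j}

/-- `cS n S`: the number of `S`-connected permutations of size `n`, i.e. permutations of
`{1, …, n}` fixing no prefix of size `j` for any `j ∈ S`. -/
noncomputable def cS (n : ℕ) (S : Finset ℕ) : ℕ :=
  Nat.card {σ : Equiv.Perm (Fin n) // ∀ j ∈ S, ¬ FixesPrefix σ j}


lemma fixesPrefix_iff {n : ℕ} (σ : Equiv.Perm (Fin n)) (s : ℕ) :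
    FixesPrefix σ s ↔ ∀ x : Fin n, x.val < s → (σ x).val < s := by
  unfold FixesPrefix
  constructor
  · intro h x hx
    have : σ x ∈ (pref n s).image σ :=
      Finset.mem_image_of_mem _ (by simp only [pref, Finset.mem_filter, Finset.mem_univ, true_and]; omega)
    rw [h] at this
    simp only [pref, Finset.mem_filter, Finset.mem_univ, true_and] at this
    omega
  · intro h
    apply Finset.eq_of_subset_of_card_le
    · intro y hy
      obtain ⟨x, hx, rfl⟩ := Finset.mem_image.1 hy
      simp only [pref, Finset.mem_filter, Finset.mem_univ, true_and] at hx ⊢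
      have := h x (by omega)
      omega
    · rw [Finset.card_image_of_injective _ σ.injective]

/-- positions -/
def posEquiv (N n j a : ℕ) (hN : N = n + j) (ha : a ≤ n) : Fin j ⊕ Fin n ≃ Fin N where
  toFun z := Sum.elim (fun r => ⟨a + r.val, by omega⟩)
    (fun q => if q.val < a then ⟨q.val, by omega⟩ else ⟨q.val + j, by omega⟩) z
  invFun x := if h : x.val < a then Sum.inr ⟨x.val, by omega⟩
    else if h' : x.val < a + j then Sum.inl ⟨x.val - a, by omega⟩
    else Sum.inr ⟨x.val - j, by omega⟩
  left_inv z := by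
    rcases z with r | q
    · have := r.2
      simp
    · have := q.2
      by_cases h : q.val < a
      · simp [h]
      · have h1 : ¬ (q.val + j < a) := by omega
        simp [h, h1]
  right_inv x := by
    have := x.2
    by_cases h : x.val < a
    · simp [h]
    · by_cases h' : x.val < a + j
      · simp only [h, h', dite_true, dite_false, Sum.elim_inl]
        ext
        simp only
        omega
      · have h1 : ¬ (x.val - j < a) := by omega
        simp only [h, h', h1, dite_false, Sum.elim_inr, if_false]
        ext
        simp only
        omega

/-- values -/
def valEquiv (N n j : ℕ) (hN : N = n + j) : Fin j ⊕ Fin n ≃ Fin N :=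
  posEquiv N n j 0 hN (Nat.zero_le _)

lemma posEquiv_inl (N n j a : ℕ) (hN : N = n + j) (ha : a ≤ n) (r : Fin j) :
    (posEquiv N n j a hN ha (Sum.inl r)).val = a + r.val := rfl

lemma posEquiv_inr (N n j a : ℕ) (hN : N = n + j) (ha : a ≤ n) (q : Fin n) :
    (posEquiv N n j a hN ha (Sum.inr q)).val = if q.val < a then q.val else q.val + j := by
  simp only [posEquiv, Equiv.coe_fn_mk, Sum.elim_inr]
  split_ifs <;> rfl

lemma valEquiv_inl (N n j : ℕ) (hN : N = n + j) (r : Fin j) :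
    (valEquiv N n j hN (Sum.inl r)).val = r.val := by
  simp [valEquiv, posEquiv_inl]

lemma valEquiv_inr (N n j : ℕ) (hN : N = n + j) (q : Fin n) :
    (valEquiv N n j hN (Sum.inr q)).val = q.val + j := by
  simp [valEquiv, posEquiv_inr]

/-- the combined permutation -/
def glue (N n j a : ℕ) (hN : N = n + j) (ha : a ≤ n) (α : Equiv.Perm (Fin j))
    (τ : Equiv.Perm (Fin n)) : Equiv.Perm (Fin N) :=
  (posEquiv N n j a hN ha).symm.trans ((Equiv.sumCongr α τ).trans (valEquiv N n j hN))

lemma glue_inl (N n j a : ℕ) (hN : N = n + j) (ha : a ≤ n) (α : Equiv.Perm (Fin j))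
    (τ : Equiv.Perm (Fin n)) (r : Fin j) :
    glue N n j a hN ha α τ (posEquiv N n j a hN ha (Sum.inl r)) =
      valEquiv N n j hN (Sum.inl (α r)) := by
  simp [glue]

lemma glue_inr (N n j a : ℕ) (hN : N = n + j) (ha : a ≤ n) (α : Equiv.Perm (Fin j))
    (τ : Equiv.Perm (Fin n)) (q : Fin n) :
    glue N n j a hN ha α τ (posEquiv N n j a hN ha (Sum.inr q)) =
      valEquiv N n j hN (Sum.inr (τ q)) := by
  simp [glue]

lemma glue_fixes (N n j a : ℕ) (hN : N = n + j) (ha : a ≤ n) (α : Equiv.Perm (Fin j))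
    (τ : Equiv.Perm (Fin n)) (s : ℕ) (hs : a ≤ s) :
    FixesPrefix (glue N n j a hN ha α τ) (s + j) ↔ FixesPrefix τ s := by
  rw [fixesPrefix_iff, fixesPrefix_iff]
  constructor
  · intro h q hq
    have := h (posEquiv N n j a hN ha (Sum.inr q)) (by rw [posEquiv_inr]; split_ifs <;> omega)
    rw [glue_inr, valEquiv_inr] at this
    omega
  · intro h x hx
    obtain ⟨z, rfl⟩ := (posEquiv N n j a hN ha).surjective x
    rcases z with r | q
    · rw [glue_inl, valEquiv_inl]
      have := (α r).2
      omega
    · rw [glue_inr, valEquiv_inr]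
      rw [posEquiv_inr] at hx
      have := h q (by split_ifs at hx <;> omega)
      omega

lemma glue_not_fixes (N n j a : ℕ) (hN : N = n + j) (ha : a ≤ n) (α : Equiv.Perm (Fin j))
    (τ : Equiv.Perm (Fin n)) (s : ℕ) (hj : 1 ≤ j) (h1 : 1 ≤ s) (hs : s ≤ a) :
    ¬ FixesPrefix (glue N n j a hN ha α τ) s := by
  intro h
  unfold FixesPrefix at h
  have h0 : (⟨0, by omega⟩ : Fin N) ∈ pref N s := by
    simp only [pref, Finset.mem_filter, Finset.mem_univ, true_and]; omega
  rw [← h] at h0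
  obtain ⟨x, hx, hx0⟩ := Finset.mem_image.1 h0
  simp only [pref, Finset.mem_filter, Finset.mem_univ, true_and] at hx
  have hx0 := congrArg Fin.val hx0
  obtain ⟨z, rfl⟩ := (posEquiv N n j a hN ha).surjective x
  rcases z with r | q
  · rw [posEquiv_inl] at hx
    omega
  · rw [glue_inr, valEquiv_inr] at hx0
    simp only at hx0
    omega

lemma glue_seg (N n j a : ℕ) (hN : N = n + j) (ha : a ≤ n) (α : Equiv.Perm (Fin j))
    (τ : Equiv.Perm (Fin n)) :
    (seg N (a + 1) (a + j)).image (glue N n j a hN ha α τ) = pref N j := by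
  ext y
  simp only [seg, pref, Finset.mem_image, Finset.mem_filter, Finset.mem_univ, true_and]
  constructor
  · rintro ⟨x, hx, rfl⟩
    obtain ⟨z, rfl⟩ := (posEquiv N n j a hN ha).surjective x
    rcases z with r | q
    · rw [glue_inl, valEquiv_inl]
      exact (α r).2
    · rw [posEquiv_inr] at hx
      split_ifs at hx <;> omega
  · intro hy
    refine ⟨posEquiv N n j a hN ha (Sum.inl (α.symm ⟨y.val, by omega⟩)), ?_, ?_⟩
    · rw [posEquiv_inl]
      have := (α.symm ⟨y.val, by omega⟩).2
      omega
    · rw [glue_inl]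
      ext
      rw [valEquiv_inl]
      simp

lemma glue_surj (N n j a : ℕ) (hN : N = n + j) (ha : a ≤ n) (σ : Equiv.Perm (Fin N))
    (h : (seg N (a + 1) (a + j)).image σ = pref N j) :
    ∃ α τ, glue N n j a hN ha α τ = σ := by
  let ρ : Equiv.Perm (Fin j ⊕ Fin n) :=
    (posEquiv N n j a hN ha).trans (σ.trans (valEquiv N n j hN).symm)
  have hρ : Set.MapsTo ρ (Set.range Sum.inl) (Set.range Sum.inl) := by
    rintro _ ⟨r, rfl⟩
    have hm : σ (posEquiv N n j a hN ha (Sum.inl r)) ∈ pref N j := by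
      rw [← h]
      apply Finset.mem_image_of_mem
      simp only [seg, Finset.mem_filter, Finset.mem_univ, true_and, posEquiv_inl]
      omega
    simp only [pref, Finset.mem_filter, Finset.mem_univ, true_and] at hm
    refine ⟨⟨(σ (posEquiv N n j a hN ha (Sum.inl r))).val, by omega⟩, ?_⟩
    change _ = (valEquiv N n j hN).symm (σ (posEquiv N n j a hN ha (Sum.inl r)))
    rw [Equiv.eq_symm_apply]
    ext
    rw [valEquiv_inl]
  obtain ⟨⟨α, τ⟩, hατ⟩ := Equiv.Perm.mem_sumCongrHom_range_of_perm_mapsTo_inl hρ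
  refine ⟨α, τ, ?_⟩
  have h2 : Equiv.sumCongr α τ = ρ := hατ
  unfold glue
  rw [h2]
  ext x
  simp [ρ]

lemma glue_inj (N n j a : ℕ) (hN : N = n + j) (ha : a ≤ n) (α α' : Equiv.Perm (Fin j))
    (τ τ' : Equiv.Perm (Fin n)) (h : glue N n j a hN ha α τ = glue N n j a hN ha α' τ') :
    α = α' ∧ τ = τ' := by
  constructor
  · ext r
    have := congrArg Fin.val
      (DFunLike.congr_fun h (posEquiv N n j a hN ha (Sum.inl r)))
    rwa [glue_inl, glue_inl, valEquiv_inl, valEquiv_inl] at this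
  · ext q
    have := congrArg Fin.val
      (DFunLike.congr_fun h (posEquiv N n j a hN ha (Sum.inr q)))
    rw [glue_inr, glue_inr, valEquiv_inr, valEquiv_inr] at this
    omega

lemma count_aux (N n j a : ℕ) (hN : N = n + j) (ha : a < n) (hj : 1 ≤ j) :
    Nat.card {σ : Equiv.Perm (Fin N) //
      (seg N (a + 1) (a + j)).image σ = pref N j ∧
      ∀ s ∈ Finset.Icc j a ∪ Finset.Icc (a + j) (N - 1), ¬ FixesPrefix σ s}
    = j ! * cS n (Finset.Icc a (n - 1)) := by
  have hc : j ! = Nat.card (Equiv.Perm (Fin j)) := by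
    rw [Nat.card_eq_fintype_card, Fintype.card_perm, Fintype.card_fin]
  rw [hc, cS, ← Nat.card_prod]
  symm
  let Φ : Equiv.Perm (Fin j) × {τ : Equiv.Perm (Fin n) //
      ∀ s ∈ Finset.Icc a (n - 1), ¬ FixesPrefix τ s} →
      {σ : Equiv.Perm (Fin N) //
      (seg N (a + 1) (a + j)).image σ = pref N j ∧
      ∀ s ∈ Finset.Icc j a ∪ Finset.Icc (a + j) (N - 1), ¬ FixesPrefix σ s} :=
    fun p => ⟨glue N n j a hN ha.le p.1 p.2.1, glue_seg N n j a hN ha.le _ _, by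
      intro s hs
      rw [Finset.mem_union, Finset.mem_Icc, Finset.mem_Icc] at hs
      rcases hs with hs | hs
      · exact glue_not_fixes N n j a hN ha.le _ _ s hj (by omega) hs.2
      · obtain ⟨t, rfl⟩ : ∃ t, s = t + j := ⟨s - j, by omega⟩
        rw [glue_fixes N n j a hN ha.le _ _ t (by omega)]
        exact p.2.2 t (Finset.mem_Icc.2 (by omega))⟩
  apply Nat.card_congr (Equiv.ofBijective Φ ⟨?_, ?_⟩)
  · rintro ⟨α, τ⟩ ⟨α', τ'⟩ h
    have := glue_inj N n j a hN ha.le _ _ _ _ (congrArg Subtype.val h)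
    exact Prod.ext this.1 (Subtype.ext this.2)
  · rintro ⟨σ, h1, h2⟩
    obtain ⟨α, τ, rfl⟩ := glue_surj N n j a hN ha.le σ h1
    refine ⟨⟨α, τ, ?_⟩, rfl⟩
    intro s hs
    rw [Finset.mem_Icc] at hs
    rw [← glue_fixes N n j a hN ha.le α τ s hs.1]
    exact h2 _ (Finset.mem_union_right _ (Finset.mem_Icc.2 (by omega)))

/-- For `1 < i < k` and `j ≥ 1`, with `K = k + 2(j−1)` and `F = {i+j−1,…,i+2(j−1)}`,
the number of permutations `σ` of `{1,…,K}` such that `σ(F) = {1,…,j}` and `σ` fixes no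
prefix of size `s` for any `s ∈ {j,…,i+j−2} ∪ {i+2(j−1),…,K−1}` equals
`j!·c_{k+j−2}^{{i+j−2,…,k+j−3}}`. -/
theorem count_fan_to_bottom (k i j : ℕ) (h1 : 1 < i) (h2 : i < k) (hj : 1 ≤ j) :
    Nat.card {σ : Equiv.Perm (Fin (k + 2 * (j - 1))) //
      (seg (k + 2 * (j - 1)) (i + j - 1) (i + 2 * (j - 1))).image σ =
        pref (k + 2 * (j - 1)) j ∧
      ∀ s ∈ Finset.Icc j (i + j - 2) ∪
          Finset.Icc (i + 2 * (j - 1)) (k + 2 * (j - 1) - 1), ¬ FixesPrefix σ s}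
    = j ! * cS (k + j - 2) (Finset.Icc (i + j - 2) (k + j - 3)) := by
  have e1 : i + j - 1 = (i + j - 2) + 1 := by omega
  have e2 : i + 2 * (j - 1) = (i + j - 2) + j := by omega
  have e3 : k + j - 3 = (k + j - 2) - 1 := by omega
  rw [e1, e2, e3]
  exact count_aux _ (k + j - 2) j (i + j - 2) (by omega) (by omega) hj
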